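/- Let α be a composition of length n, λ, μ partitions, and k ≥ 0 with λ_1 − μ_1 − k ≤ n. If T is a semistandard Young tableau of shape (λ/μ) ⊕ Δ_α with lattice reading word such that the first row of λ/μ contains at most k ones, then the tableau of shape S(λ,μ,α;k) obtained from T by shifting the foundation λ/μ to the right (keeping all entries) is also a semistandard Young tableau with lattice reading word. -/

import Mathlib

/-!
Shifting the foundation moves cells only within their rows, so the reading word does not change
and the lattice property is automatic; likewise all row and column conditions inside `Δ_α` or
inside `λ/μ` persist (`exists_shift`). The only new condition is column strictness between the
bottom row of `Δ_α`, in row `H - 1` with `H = |α|`, and the first row of `λ/μ`, in row `H`. If the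
first row of `λ/μ` is empty there is nothing to check.

Write `ν_u` and `N_u` for the number of entries `u` in `Δ_α` and in row `H`, and `n` for the
width of `Δ_α`. Row `H` is read in weakly decreasing order, so the lattice condition gives
`N_{u+1} + ν_{u+1} ≤ ν_u` (`IsStacked.count_step`), and summing,
`∑_{u ≤ v} N_u + ν_v ≤ N_0 + ν_0 ≤ k + n`. Moreover each column of `Δ_α` is filled with
`0, 1, 2, …` from the top (`IsStacked.column_full`).

Let `v` be the entry at position `k + m` of row `H`, and suppose that it is at most the entry in
column `m` of the bottom row of `Δ_α`. Then `v` occurs in every column of `Δ_α` from `m` on, so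
`ν_v ≥ n - m`, while `∑_{u ≤ v} N_u ≥ k + m + 1`. This contradicts the inequality above
(`IsStacked.entry_lt`).
-/

open Finset

/-- A diagram is a finite set of cells `(row, column)`. -/
abbrev Diagram := Finset (ℕ × ℕ)

def ht (D : Diagram) : ℕ := D.sup (fun c => c.1 + 1)
def wd (D : Diagram) : ℕ := D.sup (fun c => c.2 + 1)

/-- A semistandard Young tableau of shape `D` (entries are 0-based: the paper's
value `v` corresponds to the entry `v - 1`). -/
structure SSYT (D : Diagram) where
  entry : ℕ × ℕ → ℕ
  rowWeak : ∀ i j, (i, j) ∈ D → (i, j + 1) ∈ D → entry (i, j) ≤ entry (i, j + 1)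
  colStrict : ∀ i j, (i, j) ∈ D → (i + 1, j) ∈ D → entry (i, j) < entry (i + 1, j)
  zero_outside : ∀ c, c ∉ D → entry c = 0

/-- The content of a tableau: `content T v` is the number of cells with entry `v`. -/
noncomputable def content {D : Diagram} (T : SSYT D) : ℕ →₀ ℕ := ∑ c ∈ D, Finsupp.single (T.entry c) 1

/-- `c'` is read before (or equal to) `c` in the reading word:
rows top to bottom, each row right to left. -/
def ReadBefore (c' c : ℕ × ℕ) : Prop := c'.1 < c.1 ∨ (c'.1 = c.1 ∧ c.2 ≤ c'.2)

instance (c' c : ℕ × ℕ) : Decidable (ReadBefore c' c) := by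
  unfold ReadBefore; infer_instance

/-- The reading word of `T` is lattice. -/
def IsLattice {D : Diagram} (T : SSYT D) : Prop :=
  ∀ c ∈ D, ∀ v : ℕ,
    (D.filter (fun c' => ReadBefore c' c ∧ T.entry c' = v + 1)).card ≤
    (D.filter (fun c' => ReadBefore c' c ∧ T.entry c' = v)).card

/-- The skew Schur function of a diagram, as a power series in `x_0, x_1, …`:
the coefficient of the monomial with exponents `d` is the number of SSYT of
shape `D` and content `d`. -/
noncomputable def schurOf (D : Diagram) : MvPowerSeries ℕ ℤ :=
  fun d => (Nat.card {T : SSYT D // content T = d} : ℤ)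

/-- Number of lattice SSYT of shape `D` and content `d`. -/
noncomputable def lrCount (D : Diagram) (d : ℕ →₀ ℕ) : ℕ :=
  Nat.card {T : SSYT D // IsLattice T ∧ content T = d}

/-- Littlewood–Richardson coefficient `c^lam_{mu, d}` (Littlewood–Richardson rule). -/
noncomputable def lrCoeff (lam mu : YoungDiagram) (d : ℕ →₀ ℕ) : ℕ :=
  lrCount (lam.cells \ mu.cells) d

def diagramOfRows (L : List ℕ) : Diagram :=
  (Finset.range L.length).biUnion (fun i => (Finset.range (L.getD i 0)).image (fun j => (i, j)))

/-- The row lengths of the fat staircase `δ_α`. -/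
def staircaseRows (α : List ℕ) : List ℕ :=
  ((List.range α.length).reverse.map (fun i => List.replicate (α.getD i 0) (i + 1))).flatten

/-- The fat staircase `δ_α = (n^{α_n}, …, 1^{α_1})` for `α = (α_1, …, α_n)`. -/
def fatStaircase (α : List ℕ) : Diagram := diagramOfRows (staircaseRows α)

/-- 180 degree rotation of a diagram. -/
def rotD (D : Diagram) : Diagram :=
  D.image (fun c => (ht D - 1 - c.1, wd D - 1 - c.2))

/-- The sequence of row lengths of a diagram, as a finitely supported function. -/
noncomputable def rowContent (D : Diagram) : ℕ →₀ ℕ := ∑ c ∈ D, Finsupp.single c.1 1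

/-- A content (partition) `d` is a fat staircase. -/
def IsFatStaircase (d : ℕ →₀ ℕ) : Prop :=
  ∃ α : List ℕ, (∀ a ∈ α, 0 < a) ∧ d = rowContent (fatStaircase α)

/-- Every Schur function appearing in the expansion of `s_D` is indexed by a fat staircase. -/
def IsSumOfFatStaircases (D : Diagram) : Prop :=
  ∀ d, lrCount D d ≠ 0 → IsFatStaircase d

/-- Near-concatenation of depth `i`. -/
def nearConcat (i : ℕ) (D1 D2 : Diagram) : Diagram :=
  D1.image (fun c => (c.1 + (ht D2 - i), c.2)) ∪ D2.image (fun c => (c.1, c.2 + wd D1))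

/-- Direct sum of diagrams. -/
def directSum (D1 D2 : Diagram) : Diagram := nearConcat 0 D1 D2

/-- A single column of `l` boxes. -/
def colD (l : ℕ) : Diagram := (Finset.range l).image (fun i => (i, 0))

/-- A single row of `m` boxes. -/
def rowD (m : ℕ) : Diagram := (Finset.range m).image (fun j => (0, j))

def colLenAt (D : Diagram) (j : ℕ) : ℕ := (D.filter (fun c => c.2 = j)).card
noncomputable def leftCol (D : Diagram) : ℕ := sInf {j | ∃ i, (i, j) ∈ D}
noncomputable def blCol (D : Diagram) : ℕ := sInf {j | (ht D - 1, j) ∈ D}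
noncomputable def topRow (D : Diagram) : ℕ := sInf {i | ∃ j, (i, j) ∈ D}
noncomputable def tlCol (D : Diagram) : ℕ := sInf {j | (topRow D, j) ∈ D}
def lastRowLen (D : Diagram) : ℕ := (D.filter (fun c => c.1 = ht D - 1)).card

/-- `S(F, E; k)`: the foundation `F` is placed immediately below `E`, with the
first row of `F` beginning one box below and `k` boxes left of the bottom-left
box of `E`. -/
noncomputable def SDiagG (F E : Diagram) (k : ℕ) : Diagram :=
  E.image (fun c => (c.1, c.2 + tlCol F + k)) ∪
  F.image (fun c => (c.1 + ht E, c.2 + blCol E))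

/-- `S(λ, μ, E; k)` with foundation the skew diagram `λ/μ`. -/
noncomputable def SDiag (lam mu : YoungDiagram) (E : Diagram) (k : ℕ) : Diagram :=
  SDiagG (lam.cells \ mu.cells) E k

/-- The set `R_{α,k}` (values as in the paper, i.e. 1-based). -/
def Rset (α : List ℕ) (k : ℕ) : Set ℕ :=
  {v | ∃ j, 1 ≤ j ∧ j ≤ α.length ∧ v = 1 + (α.drop (α.length - j)).sum} ∪
  {v | v = 1 ∧ 0 < k}

def rectD (a b : ℕ) : Diagram := Finset.range a ×ˢ Finset.range b

/-- The complement `D^c` of `D` in the `a × b` rectangle: the 180 degree rotation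
of the set-theoretic complement of `D` in the rectangle. -/
def complD (a b : ℕ) (D : Diagram) : Diagram :=
  (rectD a b \ D).image (fun c => (a - 1 - c.1, b - 1 - c.2))

def IsSkewDiagram (D : Diagram) : Prop :=
  ∃ lam mu : YoungDiagram, mu ≤ lam ∧ D = lam.cells \ mu.cells

def diagramOfF (d : ℕ →₀ ℕ) : Diagram :=
  d.support.biUnion (fun i => (Finset.range (d i)).image (fun j => (i, j)))

/-- A symmetric function is Schur-positive when it is a nonnegative integer
combination of Schur functions of partitions. -/
def SchurPositive (f : MvPowerSeries ℕ ℤ) : Prop :=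
  ∃ (S : Finset (ℕ →₀ ℕ)) (a : (ℕ →₀ ℕ) → ℕ),
    (∀ d ∈ S, ∀ i, d (i + 1) ≤ d i) ∧
    f = ∑ d ∈ S, (a d : ℤ) • schurOf (diagramOfF d)

def AdjCell (c c' : ℕ × ℕ) : Prop :=
  (c.1 = c'.1 ∧ (c.2 + 1 = c'.2 ∨ c'.2 + 1 = c.2)) ∨
  (c.2 = c'.2 ∧ (c.1 + 1 = c'.1 ∨ c'.1 + 1 = c.1))

def ConnectedDiagram (D : Diagram) : Prop :=
  ∀ c ∈ D, ∀ c' ∈ D, Relation.ReflTransGen (fun a b => a ∈ D ∧ b ∈ D ∧ AdjCell a b) c c'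

/-! ### Lattice fillings of stacked diagrams -/

/-- A diagram `D` whose rows above `H` form a nonempty 180-degree rotated Young diagram occupying
the columns `w, …, w + n - 1` (with full bottom row `H - 1`), and whose row `H` is an interval. -/
structure IsStacked (D : Diagram) (H w n : ℕ) : Prop where
  pos : 0 < H
  wd_pos : 0 < n
  left : ∀ i j, (i, j) ∈ D → i < H → w ≤ j
  right : ∀ i j, (i, j) ∈ D → i < H → j < w + n
  closed : ∀ i j i' j', (i, j) ∈ D → i ≤ i' → i' < H → j ≤ j' → j' < w + n → (i', j') ∈ D
  bottom : ∀ j, w ≤ j → j < w + n → (H - 1, j) ∈ D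
  row : ∀ j j' j'', (H, j) ∈ D → (H, j'') ∈ D → j ≤ j' → j' ≤ j'' → (H, j') ∈ D

lemma SSYT.row_le {D : Diagram} (T : SSYT D) {i j j' : ℕ} (hjj : j ≤ j')
    (h : ∀ x, j ≤ x → x ≤ j' → (i, x) ∈ D) : T.entry (i, j) ≤ T.entry (i, j') := by
  induction j', hjj using Nat.le_induction with
  | base => exact le_rfl
  | succ m hm ih =>
    exact (ih fun x h1 h2 => h x h1 (by omega)).trans
      (T.rowWeak i m (h m hm (by omega)) (h (m + 1) (by omega) le_rfl))

lemma SSYT.col_lt {D : Diagram} (T : SSYT D) {i i' j : ℕ} (hii : i < i')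
    (h : ∀ x, i ≤ x → x ≤ i' → (x, j) ∈ D) : T.entry (i, j) < T.entry (i', j) := by
  induction i', hii using Nat.le_induction with
  | base => exact T.colStrict i j (h i le_rfl (by omega)) (h _ (by omega) le_rfl)
  | succ m hm ih =>
    exact (ih fun x h1 h2 => h x h1 (by omega)).trans
      (T.colStrict m j (h m (by omega) (by omega)) (h (m + 1) (by omega) le_rfl))

namespace IsStacked

variable {D : Diagram} {H w n : ℕ}

lemma col_inj (hD : IsStacked D H w n) (T : SSYT D) {i i' j : ℕ} (h : (i, j) ∈ D)
    (h' : (i', j) ∈ D) (hi : i < H) (hi' : i' < H) (he : T.entry (i, j) = T.entry (i', j)) :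
    i = i' := by
  have hr := hD.right _ _ h hi
  rcases lt_trichotomy i i' with hlt | heq | hgt
  · have := T.col_lt (j := j) hlt fun x h1 h2 => hD.closed _ _ _ _ h h1 (by omega) le_rfl hr
    omega
  · exact heq
  · have := T.col_lt (j := j) hgt fun x h1 h2 => hD.closed _ _ _ _ h' h1 (by omega) le_rfl hr
    omega

lemma upper_row_le (hD : IsStacked D H w n) (T : SSYT D) {i j j' : ℕ} (h : (i, j) ∈ D)
    (hi : i < H) (hj : j ≤ j') (hj' : j' < w + n) : T.entry (i, j) ≤ T.entry (i, j') :=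
  T.row_le hj fun x h1 h2 => hD.closed _ _ _ _ h le_rfl hi h1 (by omega)

/-- In the upper part of a lattice tableau every column is filled with consecutive values
starting from the smallest: all values up to the entry of a cell occur in its column weakly
above it. The proof is by induction in reading order: if `u + 1` sits in column `j` without a `u`
above it, then every column from `j` on contains a `u + 1` already read, while only the columns
strictly to the right of `j` can contain a `u` already read. -/
lemma column_full (hD : IsStacked D H w n) (T : SSYT D) (hT : IsLattice T) :
    ∀ i, i < H → ∀ d j, w + n - j = d → (i, j) ∈ D → ∀ u ≤ T.entry (i, j),
      ∃ i' ≤ i, (i', j) ∈ D ∧ T.entry (i', j) = u := by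
  intro i
  induction i using Nat.strong_induction_on with
  | _ i IHi =>
  intro hi d
  induction d using Nat.strong_induction_on with
  | _ d IHd =>
  intro j hd hij
  have hjr := hD.right _ _ hij hi
  -- It suffices to find the predecessor value strictly above the cell.
  suffices key : ∀ v, T.entry (i, j) = v + 1 → ∃ i' < i, (i', j) ∈ D ∧ T.entry (i', j) = v by
    intro u hu
    rcases hu.eq_or_lt with heq | hlt
    · exact ⟨i, le_rfl, hij, heq.symm⟩
    · obtain ⟨v, hv⟩ : ∃ v, T.entry (i, j) = v + 1 := ⟨T.entry (i, j) - 1, by omega⟩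
      obtain ⟨i', hi', hm, he⟩ := key v hv
      obtain ⟨i'', h1, h2, h3⟩ := IHi i' hi' (by omega) _ j rfl hm u (by omega)
      exact ⟨i'', by omega, h2, h3⟩
  intro v hv
  by_contra! hno
  have hlat := hT (i, j) hij v
  have hlow : w + n - j ≤
      (D.filter (fun c' => ReadBefore c' (i, j) ∧ T.entry c' = v + 1)).card := by
    have hch : ∀ x, j ≤ x → x < w + n → ∃ i' ≤ i, (i', x) ∈ D ∧ T.entry (i', x) = v + 1 := by
      intro x h1 h2
      rcases h1.eq_or_lt with rfl | h1
      · exact ⟨i, le_rfl, hij, hv⟩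
      · refine IHd (w + n - x) (by omega) x rfl
          (hD.closed _ _ _ _ hij le_rfl hi h1.le h2) _ ?_
        rw [← hv]
        exact hD.upper_row_le T hij hi h1.le h2
    have : Finset.Ico j (w + n) ⊆
        (D.filter (fun c' => ReadBefore c' (i, j) ∧ T.entry c' = v + 1)).image Prod.snd := by
      intro x hx
      rw [Finset.mem_Ico] at hx
      obtain ⟨i', h1, h2, h3⟩ := hch x hx.1 hx.2
      refine Finset.mem_image.2 ⟨(i', x), Finset.mem_filter.2 ⟨h2, ?_, h3⟩, rfl⟩
      rcases h1.eq_or_lt with rfl | h1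
      · exact Or.inr ⟨rfl, hx.1⟩
      · exact Or.inl h1
    have h := (Finset.card_le_card this).trans Finset.card_image_le
    simpa using h
  have hupp : (D.filter (fun c' => ReadBefore c' (i, j) ∧ T.entry c' = v)).card ≤
      (Finset.Ico (j + 1) (w + n)).card := by
    refine Finset.card_le_card_of_injOn Prod.snd ?_ ?_
    · rintro ⟨a, b⟩ hc
      obtain ⟨hm, hrb, he⟩ := Finset.mem_filter.1 hc
      simp only [ReadBefore] at hrb he
      have ha : a ≤ i := by omega
      have hb := hD.right _ _ hm (by omega)
      simp only [Finset.coe_Ico, Set.mem_Ico]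
      refine ⟨?_, hb⟩
      by_contra hlt
      have hbj : b ≤ j := by omega
      have hai : a < i := by
        rcases hrb with h | ⟨h1, h2⟩
        · exact h
        · obtain rfl : b = j := by omega
          subst h1
          omega
      have hm' := hD.closed _ _ a j hm le_rfl (by omega) hbj hjr
      have hle := hD.upper_row_le T hm (by omega) hbj hjr
      obtain ⟨i'', h1, h2, h3⟩ := IHi a hai (by omega) _ j rfl hm' v (by omega)
      exact hno i'' (by omega) h2 h3
    · rintro ⟨a, b⟩ hc ⟨a', b'⟩ hc' (hbb : b = b')
      replace hc := Finset.mem_filter.1 hc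
      replace hc' := Finset.mem_filter.1 hc'
      simp only [ReadBefore] at hc hc'
      subst hbb
      have := hD.col_inj T hc.1 hc'.1 (by omega) (by omega) (by omega)
      rw [this]
  rw [Nat.card_Ico] at hupp
  omega

/-- The lattice condition just after reading all entries `u + 1` of row `H`: since that row is
read in weakly decreasing order, no `u` of row `H` has been read by then. -/
lemma count_step (hD : IsStacked D H w n) (T : SSYT D) (hT : IsLattice T) (u : ℕ) :
    (D.filter (fun c => c.1 = H ∧ T.entry c = u + 1)).card +
      (D.filter (fun c => c.1 < H ∧ T.entry c = u + 1)).card ≤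
      (D.filter (fun c => c.1 < H ∧ T.entry c = u)).card := by
  have hpos := hD.pos
  rcases (D.filter (fun c => c.1 = H ∧ T.entry c = u + 1)).eq_empty_or_nonempty with h0 | hne
  · rw [h0, Finset.card_empty, zero_add]
    -- The bottom-left cell of the upper part is the last one read there.
    have hm := hD.bottom w le_rfl (by have := hD.wd_pos; omega)
    have hrb : ∀ c ∈ D, (ReadBefore c (H - 1, w) ↔ c.1 < H) := by
      rintro ⟨a, b⟩ hc
      have := hD.left a b hc
      simp only [ReadBefore]
      omega
    have := hT _ hm u
    rwa [Finset.filter_congr fun c hc => and_congr_left' (hrb c hc),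
      Finset.filter_congr fun c hc => and_congr_left' (hrb c hc)] at this
  · obtain ⟨⟨a, b⟩, hc, hmin⟩ := Finset.exists_min_image _ Prod.snd hne
    obtain ⟨hcD, ha, he⟩ := Finset.mem_filter.1 hc
    obtain rfl : a = H := ha
    have hlat := hT _ hcD u
    refine le_trans ?_ (hlat.trans (Finset.card_le_card ?_))
    · rw [← Finset.card_union_of_disjoint]
      · refine Finset.card_le_card ?_
        rintro ⟨x, y⟩ hxy
        rcases Finset.mem_union.1 hxy with h | h
        · have := hmin _ h
          obtain ⟨h1, h2, h3⟩ := Finset.mem_filter.1 h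
          exact Finset.mem_filter.2 ⟨h1, Or.inr ⟨h2, this⟩, h3⟩
        · obtain ⟨h1, h2, h3⟩ := Finset.mem_filter.1 h
          exact Finset.mem_filter.2 ⟨h1, Or.inl h2, h3⟩
      · refine Finset.disjoint_left.2 fun c h h' => ?_
        have h1 := (Finset.mem_filter.1 h).2.1
        have h2 := (Finset.mem_filter.1 h').2.1
        omega
    · rintro ⟨x, y⟩ hxy
      obtain ⟨h1, h2, h3⟩ := Finset.mem_filter.1 hxy
      refine Finset.mem_filter.2 ⟨h1, ?_, h3⟩
      rcases h2 with h2 | ⟨h2, h4⟩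
      · exact h2
      · exfalso
        dsimp only at h2 h4
        subst h2
        have := T.row_le h4 fun z hz hz' => hD.row _ _ _ hcD h1 hz hz'
        omega

lemma count_telescope (hD : IsStacked D H w n) (T : SSYT D) (hT : IsLattice T) (v : ℕ) :
    (D.filter (fun c => c.1 = H ∧ T.entry c ≤ v)).card +
      (D.filter (fun c => c.1 < H ∧ T.entry c = v)).card ≤
    (D.filter (fun c => c.1 = H ∧ T.entry c = 0)).card +
      (D.filter (fun c => c.1 < H ∧ T.entry c = 0)).card := by
  induction v with
  | zero => simp
  | succ v ih =>
    have hstep := hD.count_step T hT v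
    have hsub : D.filter (fun c => c.1 = H ∧ T.entry c ≤ v + 1) ⊆
        D.filter (fun c => c.1 = H ∧ T.entry c ≤ v) ∪
        D.filter (fun c => c.1 = H ∧ T.entry c = v + 1) := by
      intro c hc
      simp only [Finset.mem_union, Finset.mem_filter] at hc ⊢
      obtain ⟨h1, h2, h3⟩ := hc
      rcases h3.eq_or_lt with h | h
      · exact Or.inr ⟨h1, h2, h⟩
      · exact Or.inl ⟨h1, h2, by omega⟩
    have := (Finset.card_le_card hsub).trans (Finset.card_union_le _ _)
    omega

/-- If row `H` has at most `k` smallest entries, then its entry at position `k + m`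
exceeds the entry in column `m` of the bottom row `H - 1`. -/
lemma entry_lt (hD : IsStacked D H w n) (T : SSYT D) (hT : IsLattice T) {k m y : ℕ}
    (hones : (D.filter (fun c => c.1 = H ∧ T.entry c = 0)).card ≤ k) (hm : m < n)
    (hy : ∀ x, y ≤ x → x ≤ y + k + m → (H, x) ∈ D) :
    T.entry (H - 1, w + m) < T.entry (H, y + k + m) := by
  by_contra! hle
  have hpos := hD.pos
  have htel := hD.count_telescope T hT (T.entry (H, y + k + m))
  have hrow : k + m + 1 ≤
      (D.filter (fun c => c.1 = H ∧ T.entry c ≤ T.entry (H, y + k + m))).card := by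
    have : (Finset.Icc y (y + k + m)).card ≤
        (D.filter (fun c => c.1 = H ∧ T.entry c ≤ T.entry (H, y + k + m))).card := by
      refine Finset.card_le_card_of_injOn (fun x => (H, x)) ?_ ?_
      · intro x hx
        rw [Finset.coe_Icc, Set.mem_Icc] at hx
        exact Finset.mem_filter.2 ⟨hy x hx.1 hx.2, rfl,
          T.row_le hx.2 fun z h1 h2 => hy z (by omega) h2⟩
      · intro a _ b _ hab
        exact (Prod.mk.inj hab).2
    rw [Nat.card_Icc] at this
    omega
  have hzero : (D.filter (fun c => c.1 < H ∧ T.entry c = 0)).card ≤ n := by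
    have : (D.filter (fun c => c.1 < H ∧ T.entry c = 0)).card ≤ (Finset.Ico w (w + n)).card := by
      refine Finset.card_le_card_of_injOn Prod.snd ?_ ?_
      · rintro ⟨a, b⟩ hc
        obtain ⟨h1, h2, -⟩ := Finset.mem_filter.1 hc
        exact Finset.mem_coe.2 (Finset.mem_Ico.2 ⟨hD.left _ _ h1 h2, hD.right _ _ h1 h2⟩)
      · rintro ⟨a, b⟩ hc ⟨a', b'⟩ hc' (hbb : b = b')
        obtain ⟨h1, h2, h3⟩ := Finset.mem_filter.1 hc
        obtain ⟨h1', h2', h3'⟩ := Finset.mem_filter.1 hc'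
        subst hbb
        rw [hD.col_inj T h1 h1' h2 h2' (h3.trans h3'.symm)]
    rwa [Nat.card_Ico, Nat.add_sub_cancel_left] at this
  have hlast : n - m ≤
      (D.filter (fun c => c.1 < H ∧ T.entry c = T.entry (H, y + k + m))).card := by
    have : Finset.Ico (w + m) (w + n) ⊆ (D.filter
        (fun c => c.1 < H ∧ T.entry c = T.entry (H, y + k + m))).image Prod.snd := by
      intro x hx
      rw [Finset.mem_Ico] at hx
      have hb := hD.upper_row_le T (hD.bottom (w + m) (by omega) (by omega)) (by omega) hx.1 hx.2
      obtain ⟨i, h1, h2, h3⟩ := hD.column_full T hT (H - 1) (by omega) _ x rfl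
        (hD.bottom x (by omega) hx.2) _ (hle.trans hb)
      exact Finset.mem_image.2 ⟨(i, x), Finset.mem_filter.2 ⟨h2, by dsimp only; omega, h3⟩, rfl⟩
    have h := (Finset.card_le_card this).trans Finset.card_image_le
    rw [Nat.card_Ico] at h
    omega
  omega

end IsStacked

/-! ### Fat staircases and their rotations -/

lemma lt_ht {D : Diagram} {i j : ℕ} (h : (i, j) ∈ D) : i < ht D :=
  Finset.le_sup (f := fun c : ℕ × ℕ => c.1 + 1) h

lemma lt_wd {D : Diagram} {i j : ℕ} (h : (i, j) ∈ D) : j < wd D :=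
  Finset.le_sup (f := fun c : ℕ × ℕ => c.2 + 1) h

lemma mem_diagramOfRows (L : List ℕ) (i j : ℕ) :
    (i, j) ∈ diagramOfRows L ↔ j < L.getD i 0 := by
  simp only [diagramOfRows, Finset.mem_biUnion, Finset.mem_range, Finset.mem_image, Prod.mk.injEq]
  constructor
  · rintro ⟨a, ha, b, hb, rfl, rfl⟩
    exact hb
  · intro h
    refine ⟨i, ?_, j, h, rfl, rfl⟩
    by_contra hi
    rw [List.getD_eq_default _ _ (by omega)] at h
    omega

lemma staircaseRows_length (α : List ℕ) : (staircaseRows α).length = α.sum := by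
  simp only [staircaseRows, List.length_flatten, List.map_map, List.map_reverse, List.sum_reverse]
  conv_rhs => rw [← List.map_id α]
  congr 1
  refine List.ext_getElem (by simp) fun i h1 h2 => ?_
  have h3 : i < α.length := by simpa using h2
  simp [h3]

lemma staircaseRows_pos (α : List ℕ) : ∀ x ∈ staircaseRows α, 0 < x := by
  intro x hx
  simp only [staircaseRows, List.mem_flatten, List.mem_map] at hx
  obtain ⟨l, ⟨i, -, rfl⟩, hx⟩ := hx
  rw [List.eq_of_mem_replicate hx]
  omega

lemma staircaseRows_pairwise (α : List ℕ) : (staircaseRows α).Pairwise (· ≥ ·) := by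
  rw [staircaseRows, List.pairwise_flatten]
  constructor
  · intro l hl
    obtain ⟨i, -, rfl⟩ := List.mem_map.1 hl
    exact List.pairwise_replicate.2 (Or.inr le_rfl)
  · rw [List.pairwise_map, List.pairwise_reverse]
    refine List.pairwise_lt_range.imp ?_
    intro a b hab x hx y hy
    rw [List.eq_of_mem_replicate hx, List.eq_of_mem_replicate hy]
    omega

lemma fatStaircase_lower (α : List ℕ) {i j i' j' : ℕ} (h : (i, j) ∈ fatStaircase α)
    (hi : i' ≤ i) (hj : j' ≤ j) : (i', j') ∈ fatStaircase α := by
  rw [fatStaircase, mem_diagramOfRows] at h ⊢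
  have hlt : i < (staircaseRows α).length := by
    by_contra hi
    rw [List.getD_eq_default _ _ (by omega)] at h
    omega
  rw [List.getD_eq_getElem _ _ hlt] at h
  rw [List.getD_eq_getElem _ _ (by omega)]
  rcases hi.eq_or_lt with rfl | hi
  · omega
  · have := List.pairwise_iff_getElem.1 (staircaseRows_pairwise α) i' i (by omega) hlt hi
    omega

lemma ht_fatStaircase (α : List ℕ) : ht (fatStaircase α) = α.sum := by
  rw [← staircaseRows_length]
  apply le_antisymm
  · refine Finset.sup_le ?_
    rintro ⟨i, j⟩ hc
    rw [fatStaircase, mem_diagramOfRows] at hc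
    by_contra hi
    dsimp only at hi
    rw [List.getD_eq_default _ _ (by omega)] at hc
    omega
  · by_contra! h
    have h0 : (ht (fatStaircase α), 0) ∈ fatStaircase α := by
      generalize ht (fatStaircase α) = i at h ⊢
      rw [fatStaircase, mem_diagramOfRows, List.getD_eq_getElem _ _ h]
      exact staircaseRows_pos α _ (List.getElem_mem h)
    exact absurd (lt_ht h0) (lt_irrefl _)

lemma mem_rotD {D : Diagram} {i j : ℕ} :
    (i, j) ∈ rotD D ↔ i < ht D ∧ j < wd D ∧ (ht D - 1 - i, wd D - 1 - j) ∈ D := by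
  simp only [rotD, Finset.mem_image, Prod.mk.injEq]
  constructor
  · rintro ⟨⟨a, b⟩, h, rfl, rfl⟩
    have h1 := lt_ht h
    have h2 := lt_wd h
    dsimp only
    refine ⟨by omega, by omega, ?_⟩
    rwa [show ht D - 1 - (ht D - 1 - a) = a by omega, show wd D - 1 - (wd D - 1 - b) = b by omega]
  · rintro ⟨h1, h2, h3⟩
    exact ⟨_, h3, by dsimp only; omega, by dsimp only; omega⟩

lemma rotD_bottom (α : List ℕ) (hpos : 0 < α.sum) {j : ℕ} (hj : j < wd (fatStaircase α)) :
    (α.sum - 1, j) ∈ rotD (fatStaircase α) := by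
  rw [mem_rotD, ht_fatStaircase]
  refine ⟨by omega, hj, ?_⟩
  -- A cell realising the width, moved to row `0`, shows that row `0` has full length.
  obtain ⟨⟨a, b⟩, hc, hb⟩ := Finset.exists_mem_eq_sup (fatStaircase α)
    (by
      rw [Finset.nonempty_iff_ne_empty]
      intro h
      simp [h, wd] at hj) (fun c : ℕ × ℕ => c.2 + 1)
  change wd (fatStaircase α) = b + 1 at hb
  exact fatStaircase_lower α hc (by omega) (by omega)

lemma wd_fatStaircase_pos (α : List ℕ) (hpos : 0 < α.sum) : 0 < wd (fatStaircase α) := by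
  by_contra h
  have h0 : (0, 0) ∈ fatStaircase α := by
    rw [fatStaircase, mem_diagramOfRows, List.getD_eq_getElem _ _
      (by rwa [staircaseRows_length])]
    exact staircaseRows_pos α _ (List.getElem_mem _)
  exact h (lt_of_le_of_lt (Nat.zero_le _) (lt_wd h0))

lemma ht_rotD (α : List ℕ) (hpos : 0 < α.sum) : ht (rotD (fatStaircase α)) = α.sum := by
  apply le_antisymm
  · refine Finset.sup_le ?_
    rintro ⟨i, j⟩ hc
    have := (mem_rotD.1 hc).1
    rw [ht_fatStaircase] at this
    exact this
  · have := lt_ht (rotD_bottom α hpos (wd_fatStaircase_pos α hpos))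
    omega

lemma blCol_rotD (α : List ℕ) (hpos : 0 < α.sum) : blCol (rotD (fatStaircase α)) = 0 := by
  rw [blCol, ht_rotD α hpos, Nat.sInf_eq_zero]
  exact Or.inl (rotD_bottom α hpos (wd_fatStaircase_pos α hpos))

/-! ### Membership in the two shapes -/

lemma mem_directSum {F E : Diagram} {i j : ℕ} :
    (i, j) ∈ directSum F E ↔
      (ht E ≤ i ∧ (i - ht E, j) ∈ F) ∨ (wd F ≤ j ∧ (i, j - wd F) ∈ E) := by
  simp only [directSum, nearConcat, Finset.mem_union, Finset.mem_image, Prod.mk.injEq, Nat.sub_zero]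
  constructor
  · rintro (⟨⟨a, b⟩, h, rfl, rfl⟩ | ⟨⟨a, b⟩, h, rfl, rfl⟩)
    · left; simpa using h
    · right; simpa using h
  · rintro (⟨h, h'⟩ | ⟨h, h'⟩)
    · exact Or.inl ⟨_, h', by dsimp only; omega, rfl⟩
    · exact Or.inr ⟨_, h', rfl, by dsimp only; omega⟩

lemma mem_SDiagG {F E : Diagram} {k i j : ℕ} (hbl : blCol E = 0) :
    (i, j) ∈ SDiagG F E k ↔
      (ht E ≤ i ∧ (i - ht E, j) ∈ F) ∨ (tlCol F + k ≤ j ∧ (i, j - (tlCol F + k)) ∈ E) := by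
  simp only [SDiagG, hbl, Finset.mem_union, Finset.mem_image, Prod.mk.injEq]
  constructor
  · rintro (⟨⟨a, b⟩, h, rfl, rfl⟩ | ⟨⟨a, b⟩, h, rfl, rfl⟩)
    · right
      refine ⟨by dsimp only; omega, ?_⟩
      dsimp only
      rwa [show b + tlCol F + k - (tlCol F + k) = b by omega]
    · left; simpa using h
  · rintro (⟨h, h'⟩ | ⟨h, h'⟩)
    · exact Or.inr ⟨_, h', by dsimp only; omega, rfl⟩
    · exact Or.inl ⟨_, h', rfl, by dsimp only; omega⟩

lemma mem_skew_zero {lam mu : YoungDiagram} {j : ℕ} :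
    (0, j) ∈ lam.cells \ mu.cells ↔ mu.rowLen 0 ≤ j ∧ j < lam.rowLen 0 := by
  rw [Finset.mem_sdiff, YoungDiagram.mem_cells, YoungDiagram.mem_cells,
    YoungDiagram.mem_iff_lt_rowLen, YoungDiagram.mem_iff_lt_rowLen]
  omega

lemma tlCol_skew {lam mu : YoungDiagram} {j : ℕ} (h : (0, j) ∈ lam.cells \ mu.cells) :
    tlCol (lam.cells \ mu.cells) = mu.rowLen 0 := by
  have htop : topRow (lam.cells \ mu.cells) = 0 := by
    rw [topRow, Nat.sInf_eq_zero]
    exact Or.inl ⟨j, h⟩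
  have hj := mem_skew_zero.1 h
  rw [tlCol, htop]
  refine IsLeast.csInf_eq ⟨?_, fun x hx => (mem_skew_zero.1 hx).1⟩
  exact mem_skew_zero.2 ⟨le_rfl, by omega⟩

lemma isStacked_directSum (α : List ℕ) (hpos : 0 < α.sum) (lam mu : YoungDiagram) :
    IsStacked (directSum (lam.cells \ mu.cells) (rotD (fatStaircase α))) α.sum
      (wd (lam.cells \ mu.cells)) (wd (fatStaircase α)) := by
  have hht := ht_rotD α hpos
  have hup : ∀ i j, i < α.sum →
      ((i, j) ∈ directSum (lam.cells \ mu.cells) (rotD (fatStaircase α)) ↔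
        wd (lam.cells \ mu.cells) ≤ j ∧
          (i, j - wd (lam.cells \ mu.cells)) ∈ rotD (fatStaircase α)) := by
    intro i j hi
    rw [mem_directSum, hht]
    constructor
    · rintro (h | h)
      · omega
      · exact h
    · exact Or.inr
  have hrow : ∀ j, (α.sum, j) ∈ directSum (lam.cells \ mu.cells) (rotD (fatStaircase α)) ↔
      mu.rowLen 0 ≤ j ∧ j < lam.rowLen 0 := by
    intro j
    rw [mem_directSum, hht, Nat.sub_self, mem_skew_zero]
    constructor
    · rintro (h | h)
      · exact h.2
      · have := lt_ht h.2
        omega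
    · exact fun h => Or.inl ⟨le_rfl, h⟩
  refine ⟨hpos, wd_fatStaircase_pos α hpos, ?_, ?_, ?_, ?_, ?_⟩
  · intro i j h hi
    exact ((hup i j hi).1 h).1
  · intro i j h hi
    obtain ⟨h1, h2⟩ := (hup i j hi).1 h
    have := (mem_rotD.1 h2).2.1
    omega
  · intro i j i' j' h hi hi' hj hj'
    obtain ⟨h1, h2⟩ := (hup i j (by omega)).1 h
    obtain ⟨h3, h4, h5⟩ := mem_rotD.1 h2
    rw [ht_fatStaircase] at *
    refine (hup i' j' hi').2 ⟨by omega, mem_rotD.2 ?_⟩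
    rw [ht_fatStaircase]
    exact ⟨hi', by omega, fatStaircase_lower α h5 (by omega) (by omega)⟩
  · intro j h1 h2
    exact (hup _ _ (by omega)).2 ⟨h1, rotD_bottom α hpos (by omega)⟩
  · intro j j' j'' h h'' h1 h2
    rw [hrow] at *
    omega

/-! ### Shifting the upper part -/

/-- Moving the part `E` above row `H` horizontally from offset `w` to offset `s` changes neither
the reading word nor the conditions inside `E` or inside `F`; only the column condition between
row `H - 1` and row `H` has to be supplied, in the form of `hkey`. -/
lemma exists_shift {D S F E : Diagram} {H w s : ℕ} (hE : ∀ i j, (i, j) ∈ E → i < H)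
    (hD : ∀ i j, (i, j) ∈ D ↔ (H ≤ i ∧ (i - H, j) ∈ F) ∨ (w ≤ j ∧ (i, j - w) ∈ E))
    (hS : ∀ i j, (i, j) ∈ S ↔ (H ≤ i ∧ (i - H, j) ∈ F) ∨ (s ≤ j ∧ (i, j - s) ∈ E))
    (T : SSYT D) (hT : IsLattice T)
    (hkey : ∀ j, (H - 1, j) ∈ E → (0, j + s) ∈ F →
      T.entry (H - 1, j + w) < T.entry (H, j + s)) :
    ∃ T' : SSYT S, IsLattice T' ∧
      (∀ i j, (i, j) ∈ F → T'.entry (i + H, j) = T.entry (i + H, j)) ∧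
      (∀ i j, (i, j) ∈ E → T'.entry (i, j + s) = T.entry (i, j + w)) := by
  have hDlo : ∀ i j, H ≤ i → ((i, j) ∈ D ↔ (i - H, j) ∈ F) := by
    intro i j hi
    rw [hD]
    exact ⟨fun h => h.elim And.right fun h => absurd (hE _ _ h.2) (by omega),
      fun h => Or.inl ⟨hi, h⟩⟩
  have hSlo : ∀ i j, H ≤ i → ((i, j) ∈ S ↔ (i - H, j) ∈ F) := by
    intro i j hi
    rw [hS]
    exact ⟨fun h => h.elim And.right fun h => absurd (hE _ _ h.2) (by omega),
      fun h => Or.inl ⟨hi, h⟩⟩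
  have hDup : ∀ i j, i < H → ((i, j) ∈ D ↔ w ≤ j ∧ (i, j - w) ∈ E) := by
    intro i j hi
    rw [hD]
    exact ⟨fun h => h.elim (fun h => absurd h.1 (by omega)) id, Or.inr⟩
  have hSup : ∀ i j, i < H → ((i, j) ∈ S ↔ s ≤ j ∧ (i, j - s) ∈ E) := by
    intro i j hi
    rw [hS]
    exact ⟨fun h => h.elim (fun h => absurd h.1 (by omega)) id, Or.inr⟩
  -- The relabelling of cells `S → D` and its inverse.
  let φ : ℕ × ℕ → ℕ × ℕ := fun c => if H ≤ c.1 then c else (c.1, c.2 - s + w)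
  let ψ : ℕ × ℕ → ℕ × ℕ := fun c => if H ≤ c.1 then c else (c.1, c.2 - w + s)
  have hφlo : ∀ i j, H ≤ i → φ (i, j) = (i, j) := fun i j hi => if_pos hi
  have hφup : ∀ i j, i < H → φ (i, j) = (i, j - s + w) := fun i j hi => if_neg (by simpa using hi)
  have hψlo : ∀ i j, H ≤ i → ψ (i, j) = (i, j) := fun i j hi => if_pos hi
  have hψup : ∀ i j, i < H → ψ (i, j) = (i, j - w + s) := fun i j hi => if_neg (by simpa using hi)
  have hφmem : ∀ c ∈ S, φ c ∈ D := by
    rintro ⟨i, j⟩ h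
    rcases lt_or_ge i H with hi | hi
    · rw [hφup i j hi, hDup _ _ hi, Nat.add_sub_cancel]
      exact ⟨by omega, ((hSup _ _ hi).1 h).2⟩
    · rw [hφlo i j hi, hDlo _ _ hi]
      exact (hSlo _ _ hi).1 h
  have hψmem : ∀ c ∈ D, ψ c ∈ S := by
    rintro ⟨i, j⟩ h
    rcases lt_or_ge i H with hi | hi
    · rw [hψup i j hi, hSup _ _ hi, Nat.add_sub_cancel]
      exact ⟨by omega, ((hDup _ _ hi).1 h).2⟩
    · rw [hψlo i j hi, hSlo _ _ hi]
      exact (hDlo _ _ hi).1 h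
  have hψφ : ∀ c ∈ S, ψ (φ c) = c := by
    rintro ⟨i, j⟩ h
    rcases lt_or_ge i H with hi | hi
    · have := ((hSup _ _ hi).1 h).1
      rw [hφup i j hi, hψup _ _ hi, Nat.add_sub_cancel, Nat.sub_add_cancel this]
    · rw [hφlo i j hi, hψlo i j hi]
  have hφψ : ∀ c ∈ D, φ (ψ c) = c := by
    rintro ⟨i, j⟩ h
    rcases lt_or_ge i H with hi | hi
    · have := ((hDup _ _ hi).1 h).1
      rw [hψup i j hi, hφup _ _ hi, Nat.add_sub_cancel, Nat.sub_add_cancel this]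
    · rw [hψlo i j hi, hφlo i j hi]
  have hread : ∀ c ∈ S, ∀ c' ∈ S, (ReadBefore c' c ↔ ReadBefore (φ c') (φ c)) := by
    rintro ⟨i, j⟩ h ⟨i', j'⟩ h'
    simp only [ReadBefore]
    rcases lt_or_ge i H with hi | hi <;> rcases lt_or_ge i' H with hi' | hi'
    · have h1 := ((hSup _ _ hi).1 h).1
      have h2 := ((hSup _ _ hi').1 h').1
      rw [hφup i j hi, hφup i' j' hi']
      dsimp only
      omega
    · rw [hφup i j hi, hφlo i' j' hi']
      dsimp only
      omega
    · rw [hφlo i j hi, hφup i' j' hi']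
      dsimp only
      omega
    · rw [hφlo i j hi, hφlo i' j' hi']
  let T' : SSYT S :=
    { entry := fun c => if c ∈ S then T.entry (φ c) else 0
      rowWeak := by
        intro i j h h'
        rw [if_pos h, if_pos h']
        have m := hφmem _ h
        have m' := hφmem _ h'
        rcases lt_or_ge i H with hi | hi
        · have h1 := ((hSup _ _ hi).1 h).1
          rw [hφup _ _ hi] at m m' ⊢
          rw [hφup _ _ hi]
          rw [show j + 1 - s + w = j - s + w + 1 by omega] at m' ⊢
          exact T.rowWeak _ _ m m'
        · rw [hφlo _ _ hi] at m m' ⊢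
          rw [hφlo _ _ hi]
          exact T.rowWeak _ _ m m'
      colStrict := by
        intro i j h h'
        rw [if_pos h, if_pos h']
        have m := hφmem _ h
        have m' := hφmem _ h'
        rcases lt_or_ge i H with hi | hi
        · rcases lt_or_ge (i + 1) H with hi' | hi'
          · rw [hφup _ _ hi] at m ⊢
            rw [hφup _ _ hi'] at m' ⊢
            exact T.colStrict _ _ m m'
          · obtain rfl : H = i + 1 := by omega
            obtain ⟨h1, h2⟩ := (hSup _ _ hi).1 h
            have h3 := (hSlo _ _ hi').1 h'
            rw [hφup _ _ hi, hφlo _ _ hi']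
            have := hkey (j - s) h2 (by rwa [Nat.sub_add_cancel h1, ← Nat.sub_self (i + 1)])
            rwa [Nat.sub_add_cancel h1] at this
        · rw [hφlo _ _ hi] at m ⊢
          rw [hφlo _ _ (by omega)] at m' ⊢
          exact T.colStrict _ _ m m'
      zero_outside := fun c hc => if_neg hc }
  have hT' : ∀ c ∈ S, T'.entry c = T.entry (φ c) := fun c hc => if_pos hc
  refine ⟨T', ?_, ?_, ?_⟩
  · intro c hc v
    have hcard : ∀ u, (S.filter (fun c' => ReadBefore c' c ∧ T'.entry c' = u)).card =
        (D.filter (fun c' => ReadBefore c' (φ c) ∧ T.entry c' = u)).card := by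
      intro u
      refine Finset.card_nbij' φ ψ ?_ ?_ ?_ ?_
      · intro x hx
        obtain ⟨h1, h2, h3⟩ := Finset.mem_filter.1 hx
        exact Finset.mem_filter.2
          ⟨hφmem _ h1, (hread _ hc _ h1).1 h2, (hT' _ h1).symm.trans h3⟩
      · intro x hx
        obtain ⟨h1, h2, h3⟩ := Finset.mem_filter.1 hx
        refine Finset.mem_filter.2 ⟨hψmem _ h1, (hread _ hc _ (hψmem _ h1)).2 ?_, ?_⟩
        · rwa [hφψ _ h1]
        · rw [hT' _ (hψmem _ h1), hφψ _ h1, h3]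
      · intro x hx
        exact hψφ _ (Finset.mem_filter.1 hx).1
      · intro x hx
        exact hφψ _ (Finset.mem_filter.1 hx).1
    rw [hcard, hcard]
    exact hT _ (hφmem _ hc) v
  · intro i j h
    have hm : (i + H, j) ∈ S := (hSlo _ _ (by omega)).2 (by rwa [Nat.add_sub_cancel])
    rw [hT' _ hm, hφlo _ _ (by omega)]
  · intro i j h
    have hi := hE _ _ h
    have hm : (i, j + s) ∈ S :=
      (hSup _ _ hi).2 ⟨by omega, by rwa [Nat.add_sub_cancel]⟩
    rw [hT' _ hm, hφup _ _ hi, Nat.add_sub_cancel]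

/-- a lattice SSYT of shape `(λ/μ) ⊕ Δ_α` with at most `k` smallest
entries (paper's 1's) in the first row of `λ/μ` yields, by shifting the
foundation to the right, a lattice SSYT of shape `S(λ, μ, α^◁; k)`. -/
theorem shift_foundation_lattice (α : List ℕ) (hα : ∀ a ∈ α, 0 < a) (hne : α ≠ [])
    (lam mu : YoungDiagram) (hsub : mu ≤ lam) (k : ℕ)
    (hk : lam.rowLen 0 - mu.rowLen 0 - k ≤ α.length)
    (T : SSYT (directSum (lam.cells \ mu.cells) (rotD (fatStaircase α))))
    (hT : IsLattice T)
    (hones : ((directSum (lam.cells \ mu.cells) (rotD (fatStaircase α))).filter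
        (fun c => c.1 = α.sum ∧ T.entry c = 0)).card ≤ k) :
    ∃ T' : SSYT (SDiag lam mu (rotD (fatStaircase α)) k), IsLattice T' ∧
      (∀ c ∈ lam.cells \ mu.cells,
        T'.entry (c.1 + α.sum, c.2 + blCol (rotD (fatStaircase α))) =
          T.entry (c.1 + α.sum, c.2)) ∧
      (∀ c ∈ rotD (fatStaircase α),
        T'.entry (c.1, c.2 + tlCol (lam.cells \ mu.cells) + k) =
          T.entry (c.1, c.2 + wd (lam.cells \ mu.cells))) := by
  have hpos : 0 < α.sum := by
    obtain ⟨a, l, rfl⟩ := List.exists_cons_of_ne_nil hne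
    have := hα a (by simp)
    simp only [List.sum_cons]
    omega
  have hst := isStacked_directSum α hpos lam mu
  have hht := ht_rotD α hpos
  have hbl := blCol_rotD α hpos
  obtain ⟨T', h1, h2, h3⟩ := exists_shift (F := lam.cells \ mu.cells)
    (E := rotD (fatStaircase α)) (H := α.sum) (w := wd (lam.cells \ mu.cells))
    (s := tlCol (lam.cells \ mu.cells) + k)
    (S := SDiag lam mu (rotD (fatStaircase α)) k)
    (fun i j h => hht ▸ lt_ht h)
    (fun i j => by rw [mem_directSum, hht])
    (fun i j => by rw [SDiag, mem_SDiagG hbl, hht]) T hT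
    (by
      intro j hj h0
      rw [tlCol_skew h0] at h0 ⊢
      have h0' := mem_skew_zero.1 h0
      have := hst.entry_lt T hT hones (m := j) (y := mu.rowLen 0) (mem_rotD.1 hj).2.1 (by
        intro x hx hx'
        rw [mem_directSum, hht, Nat.sub_self, mem_skew_zero]
        exact Or.inl ⟨le_rfl, by omega⟩)
      rwa [Nat.add_comm (mu.rowLen 0 + k) j, Nat.add_comm (wd _) j] at * )
  refine ⟨T', h1, ?_, ?_⟩
  · rintro ⟨i, j⟩ h
    rw [hbl]
    exact h2 i j h
  · rintro ⟨i, j⟩ h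
    rw [Nat.add_assoc]
    exact h3 i j h
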